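/- Let H be a partial mixed graph and M a completion of H in which the edge between A and B is A → B. Let S_A = {A} ∪ {V : V is adjacent to A in H and the edge V–A has an arrowhead at A}. Suppose K is a vertex such that there is an uncovered possible directed path ⟨A, B, …, K⟩ in H whose second vertex is B, and suppose T ∈ S_A is adjacent to K in H. Then in M the edge between T and K has an arrowhead at K (in particular, K → T does not hold in M). -/

import Mathlib

/-- Marks at edge ends in a partial mixed graph. -/
inductive Mark : Type
  | tail
  | arrow
  | circle
deriving DecidableEq

/-- A partial mixed graph (PMG): a symmetric irreflexive adjacency relation together
with, for each ordered pair `(a, b)` of adjacent vertices, a mark `mark a b` at `b` on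
the edge `a–b`, such that no edge has tails at both endpoints. -/
structure PMG (V : Type) where
  adj : V → V → Prop
  symm : ∀ a b, adj a b → adj b a
  irrefl : ∀ a, ¬ adj a a
  mark : V → V → Mark
  noDoubleTail : ∀ a b, adj a b → ¬ (mark a b = Mark.tail ∧ mark b a = Mark.tail)

namespace PMG

variable {V : Type}

/-- `a → b`: adjacent, tail at `a`, arrowhead at `b`. -/
def dir (G : PMG V) (a b : V) : Prop :=
  G.adj a b ∧ G.mark b a = Mark.tail ∧ G.mark a b = Mark.arrow

/-- `a ↔ b`: adjacent, arrowheads at both endpoints. -/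
def bidir (G : PMG V) (a b : V) : Prop :=
  G.adj a b ∧ G.mark b a = Mark.arrow ∧ G.mark a b = Mark.arrow

/-- `a` is an ancestor of `b`: `a = b` or there is a directed path from `a` to `b`. -/
def Anc (G : PMG V) (a b : V) : Prop :=
  Relation.ReflTransGen G.dir a b

/-- `a` is an ancestor of some vertex of the set `S`. -/
def AncSet (G : PMG V) (a : V) (S : Set V) : Prop :=
  ∃ v ∈ S, G.Anc a v

/-- A mixed graph: a PMG with no circle marks. -/
def IsMixed (G : PMG V) : Prop :=
  ∀ a b, G.adj a b → G.mark a b ≠ Mark.circle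

/-- Ancestral: no directed cycles and no almost directed cycles. -/
def Ancestral (G : PMG V) : Prop :=
  ∀ a b, G.Anc a b → a ≠ b → ¬ G.dir b a ∧ ¬ G.bidir a b

/-- Unshielded collider `(a, b, c)`: `a, c` both adjacent to `b`, `a` and `c`
distinct and nonadjacent, arrowheads at `b` on both edges. -/
def UnshieldedCollider (G : PMG V) (a b c : V) : Prop :=
  a ≠ c ∧ G.adj a b ∧ G.adj c b ∧ ¬ G.adj a c ∧
    G.mark a b = Mark.arrow ∧ G.mark c b = Mark.arrow

/-- `M` is a completion of the PMG `H`: same vertices and adjacencies, all non-circle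
marks of `H` occur identically in `M`, `M` is an ancestral mixed graph, and every
unshielded collider of `M` is already an unshielded collider of `H`. -/
def Completion (H M : PMG V) : Prop :=
  (∀ a b, M.adj a b ↔ H.adj a b) ∧
  (∀ a b, H.adj a b → H.mark a b ≠ Mark.circle → M.mark a b = H.mark a b) ∧
  M.IsMixed ∧ M.Ancestral ∧
  (∀ a b c, M.UnshieldedCollider a b c → H.UnshieldedCollider a b c)

/-- An edge usable in a possible directed path from `a` to `b`:
adjacent, no arrowhead at `a`, no tail at `b`. -/
def possEdge (G : PMG V) (a b : V) : Prop :=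
  G.adj a b ∧ G.mark b a ≠ Mark.arrow ∧ G.mark a b ≠ Mark.tail

/-- A circle edge: adjacent with circle marks at both endpoints. -/
def circleEdge (G : PMG V) (a b : V) : Prop :=
  G.adj a b ∧ G.mark a b = Mark.circle ∧ G.mark b a = Mark.circle

/-- `p 0, …, p n` is a path: distinct vertices, consecutive ones adjacent. -/
def IsPathOn (G : PMG V) (p : ℕ → V) (n : ℕ) : Prop :=
  (∀ i ≤ n, ∀ j ≤ n, p i = p j → i = j) ∧ ∀ i < n, G.adj (p i) (p (i+1))

/-- `p 0, …, p n` is a possible directed path. -/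
def IsPossDirPathOn (G : PMG V) (p : ℕ → V) (n : ℕ) : Prop :=
  (∀ i ≤ n, ∀ j ≤ n, p i = p j → i = j) ∧ ∀ i < n, G.possEdge (p i) (p (i+1))

/-- `p 0, …, p n` is a circle path. -/
def IsCirclePathOn (G : PMG V) (p : ℕ → V) (n : ℕ) : Prop :=
  (∀ i ≤ n, ∀ j ≤ n, p i = p j → i = j) ∧ ∀ i < n, G.circleEdge (p i) (p (i+1))

/-- The path `p 0, …, p n` is uncovered: any two nonconsecutive neighbours of an
internal vertex are nonadjacent. -/
def UncoveredOn (G : PMG V) (p : ℕ → V) (n : ℕ) : Prop :=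
  ∀ i, i + 2 ≤ n → ¬ G.adj (p i) (p (i+2))

/-- `F_x` relative to `V'`: the vertices of `V'` adjacent to `x` whose edge carries
a circle or an arrowhead at `x`. -/
def Fset (G : PMG V) (V' : Set V) (x : V) : Set V :=
  {v | v ∈ V' ∧ G.adj v x ∧ (G.mark v x = Mark.circle ∨ G.mark v x = Mark.arrow)}

/-- `p 0, …, p n` is an unbridged path relative to `V'` in `G`: an uncovered circle
path with at least one edge, lying in `G[−V']`, with
`F_{p 0} \ F_{p 1} ≠ ∅` and `F_{p n} \ F_{p (n-1)} ≠ ∅`. -/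
def UnbridgedOn (G : PMG V) (V' : Set V) (p : ℕ → V) (n : ℕ) : Prop :=
  1 ≤ n ∧ G.IsCirclePathOn p n ∧ G.UncoveredOn p n ∧
  (∀ i ≤ n, p i ∉ V') ∧
  (G.Fset V' (p 0) \ G.Fset V' (p 1)).Nonempty ∧
  (G.Fset V' (p n) \ G.Fset V' (p (n-1))).Nonempty

/-- The set `S_A`: `A` together with all vertices adjacent to `A` whose edge has an
arrowhead at `A`. -/
def SA (G : PMG V) (A : V) : Set V :=
  {A} ∪ {v | G.adj v A ∧ G.mark v A = Mark.arrow}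

end PMG

/-- Let `M` be a completion of the PMG `H` in which `A → B`. If there is an
uncovered possible directed path `⟨A, B, …, K⟩` in `H` whose second vertex is `B`,
and `T ∈ S_A` is adjacent to `K` in `H`, then in `M` the edge between `T` and `K`
has an arrowhead at `K` (in particular `K → T` does not hold in `M`). -/
theorem arrowhead_at_end_of_ppd_path {V : Type} (H M : PMG V)
    (hHM : PMG.Completion H M)
    (A B K T : V) (hdirAB : M.dir A B)
    (hT : T ∈ H.SA A) (hTK : H.adj T K)
    (p : ℕ → V) (n : ℕ) (hn : 1 ≤ n)
    (hpath : H.IsPossDirPathOn p n) (hunc : H.UncoveredOn p n)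
    (hA : p 0 = A) (hB : p 1 = B) (hK : p n = K) :
    M.mark T K = Mark.arrow ∧ ¬ M.dir K T := by
  obtain ⟨hadj, hmark, hmix, hanc, hcol⟩ := hHM
  obtain ⟨hinj, hposs⟩ := hpath
  have hstep : ∀ i, i < n → M.dir (p i) (p (i+1)) := by
    intro i
    induction i with
    | zero => intro _; rw [hA]; simpa [hB] using hdirAB
    | succ k ih =>
      intro hk
      obtain ⟨h1, h2, h3⟩ := ih (by omega)
      obtain ⟨e1, e2, e3⟩ := hposs (k+1) hk
      have a1 : M.adj (p (k+1)) (p (k+1+1)) := (hadj _ _).2 e1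
      have a2 := M.symm _ _ a1
      have ht : M.mark (p (k+1+1)) (p (k+1)) = Mark.tail := by
        cases hm : M.mark (p (k+1+1)) (p (k+1)) with
        | tail => rfl
        | circle => exact absurd hm (hmix _ _ a2)
        | arrow =>
          exfalso
          have hc := hcol (p k) (p (k+1)) (p (k+1+1)) ⟨?_, h1, a2, ?_, h3, hm⟩
          · exact e2 hc.2.2.2.2.2
          · intro h
            have := hinj k (by omega) (k+1+1) (by omega) h
            omega
          · intro h
            exact hunc k (by omega) ((hadj _ _).1 h)
      refine ⟨a1, ht, ?_⟩
      cases hm : M.mark (p (k+1)) (p (k+1+1)) with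
      | tail => exact absurd ⟨hm, ht⟩ (M.noDoubleTail _ _ a1)
      | circle => exact absurd hm (hmix _ _ a1)
      | arrow => rfl
  have hreach : ∀ i, i ≤ n → M.Anc (p 0) (p i) := by
    intro i
    induction i with
    | zero => intro _; exact Relation.ReflTransGen.refl
    | succ k ih => intro hk; exact Relation.ReflTransGen.tail (ih (by omega)) (hstep k (by omega))
  have hAK : M.Anc A K := by
    have := hreach n le_rfl
    rwa [hA, hK] at this
  have hne : A ≠ K := by
    intro h
    have := hinj 0 (by omega) n le_rfl (by rw [hA, hK, h])
    omega
  have hMTK : M.adj T K := (hadj _ _).2 hTK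
  have hMKT := M.symm _ _ hMTK
  have hnd : ¬ M.dir K T := by
    intro hd
    rcases hT with hT | ⟨hT1, hT2⟩
    · have hT' : T = A := hT
      subst hT'
      exact (hanc _ _ hAK hne).1 hd
    · have hAT : M.Anc A T := Relation.ReflTransGen.tail hAK hd
      have hTA : M.adj T A := (hadj _ _).2 hT1
      have hneAT : A ≠ T := by
        rintro rfl
        exact H.irrefl _ hT1
      have hm : M.mark T A = Mark.arrow := by
        rw [hmark _ _ hT1 (by rw [hT2]; decide), hT2]
      have h := hanc _ _ hAT hneAT
      have hAT' := M.symm _ _ hTA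
      cases hm2 : M.mark A T with
      | tail => exact h.1 ⟨hTA, hm2, hm⟩
      | circle => exact hmix _ _ hAT' hm2
      | arrow => exact h.2 ⟨hAT', hm, hm2⟩
  refine ⟨?_, hnd⟩
  cases hm : M.mark T K with
  | arrow => rfl
  | circle => exact absurd hm (hmix _ _ hMTK)
  | tail =>
    exfalso
    cases hm2 : M.mark K T with
    | tail => exact M.noDoubleTail _ _ hMTK ⟨hm, hm2⟩
    | circle => exact hmix _ _ hMKT hm2
    | arrow => exact hnd ⟨hMKT, hm, hm2⟩
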